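/- Let G be a strong tournament of order n ≥ 3. Then the Wiener index of ILTT(G) satisfies W(ILTT(G)) = 4(n + W(G)). -/

import Mathlib

open scoped Classical

noncomputable section

/-- A tournament: a finite directed graph where every pair of distinct nodes
is joined by exactly one arc. -/
structure Tournament where
  V : Type
  [fintypeV : Fintype V]
  [decEqV : DecidableEq V]
  arc : V → V → Prop
  irrefl : ∀ x, ¬ arc x x
  exactlyOne : ∀ x y, x ≠ y → (arc x y ↔ ¬ arc y x)

attribute [instance] Tournament.fintypeV Tournament.decEqV

namespace Tournament

/-- The ILTT extension: vertices are `V ⊕ V` where `Sum.inl x` is the original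
node `x` and `Sum.inr x` is its clone `x'`. -/
def ILTT (T : Tournament) : Tournament where
  V := T.V ⊕ T.V
  arc := fun u v =>
    match u, v with
    | Sum.inl x, Sum.inl y => T.arc x y
    | Sum.inl x, Sum.inr y => T.arc x y
    | Sum.inr x, Sum.inl y => T.arc x y ∨ x = y
    | Sum.inr x, Sum.inr y => T.arc x y
  irrefl := by rintro (x | x) h <;> exact T.irrefl x h
  exactlyOne := by
    rintro (x | x) (y | y) hxy
    · exact T.exactlyOne x y (fun h => hxy (by rw [h]))
    · by_cases h : x = y
      · subst h; simp [T.irrefl x]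
      · have := T.exactlyOne x y h
        simp only [not_or]
        constructor
        · intro ha; exact ⟨this.mp ha, fun h' => h h'.symm⟩
        · intro ha; exact this.mpr ha.1
    · by_cases h : x = y
      · subst h; simp [T.irrefl x]
      · have := T.exactlyOne x y h
        constructor
        · rintro (ha | ha)
          · exact this.mp ha
          · exact absurd ha h
        · intro ha; exact Or.inl (this.mpr ha)
    · exact T.exactlyOne x y (fun h => hxy (by rw [h]))

/-- The dual ILTT extension: identical to `ILTT` except the arcs between
clones are reversed. -/
def ILTTd (T : Tournament) : Tournament where
  V := T.V ⊕ T.V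
  arc := fun u v =>
    match u, v with
    | Sum.inl x, Sum.inl y => T.arc x y
    | Sum.inl x, Sum.inr y => T.arc x y
    | Sum.inr x, Sum.inl y => T.arc x y ∨ x = y
    | Sum.inr x, Sum.inr y => T.arc y x
  irrefl := by rintro (x | x) h <;> exact T.irrefl x h
  exactlyOne := by
    rintro (x | x) (y | y) hxy
    · exact T.exactlyOne x y (fun h => hxy (by rw [h]))
    · by_cases h : x = y
      · subst h; simp [T.irrefl x]
      · have := T.exactlyOne x y h
        simp only [not_or]
        constructor
        · intro ha; exact ⟨this.mp ha, fun h' => h h'.symm⟩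
        · intro ha; exact this.mpr ha.1
    · by_cases h : x = y
      · subst h; simp [T.irrefl x]
      · have := T.exactlyOne x y h
        constructor
        · rintro (ha | ha)
          · exact this.mp ha
          · exact absurd ha h
        · intro ha; exact Or.inl (this.mpr ha)
    · exact T.exactlyOne y x (fun h => hxy (by rw [h]))

/-- A tournament is strong if, for every ordered pair of nodes, there is a
directed path from the first to the second. -/
def Strong (T : Tournament) : Prop := ∀ u v : T.V, Relation.ReflTransGen T.arc u v

/-- `HasWalk T u v n` : there is a directed walk of length `n` from `u` to `v`. -/
def HasWalk (T : Tournament) (u v : T.V) (n : ℕ) : Prop :=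
  ∃ f : Fin (n + 1) → T.V, f 0 = u ∧ f (Fin.last n) = v ∧
    ∀ i : Fin n, T.arc (f i.castSucc) (f i.succ)

/-- The distance from `u` to `v`: the length of a shortest directed path. -/
def dist (T : Tournament) (u v : T.V) : ℕ := sInf {n | HasWalk T u v n}

/-- The diameter: the maximum distance over ordered pairs of distinct nodes. -/
def diam (T : Tournament) : ℕ :=
  (Finset.univ.filter (fun p : T.V × T.V => p.1 ≠ p.2)).sup
    (fun p => T.dist p.1 p.2)

/-- The Wiener index: the sum of distances over ordered pairs of distinct nodes. -/
def wiener (T : Tournament) : ℕ :=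
  ∑ p ∈ Finset.univ.filter (fun p : T.V × T.V => p.1 ≠ p.2), T.dist p.1 p.2

/-- The average distance `L(T) = W(T)/(m(m-1))` where `m` is the order. -/
def avgDist (T : Tournament) : ℝ :=
  (T.wiener : ℝ) / ((Fintype.card T.V : ℝ) * ((Fintype.card T.V : ℝ) - 1))

/-- `J` is a subtournament of `K`. -/
def IsSubtournament (J K : Tournament) : Prop :=
  ∃ f : J.V → K.V, Function.Injective f ∧ ∀ u v : J.V, J.arc u v ↔ K.arc (f u) (f v)

/-- The linear order on `t` nodes. -/
def linearTournament (t : ℕ) : Tournament where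
  V := Fin t
  arc := fun i j => i < j
  irrefl := fun i => lt_irrefl i
  exactlyOne := fun i j h => by
    rw [not_lt]
    exact ⟨le_of_lt, fun hle => hle.lt_of_ne h⟩

/-- A tournament is Hamiltonian if it has a directed cycle through all nodes. -/
def IsHamiltonian (T : Tournament) : Prop :=
  ∃ f : ZMod (Fintype.card T.V) ≃ T.V, ∀ i, T.arc (f i) (f (i + 1))

/-- `S` is an in-dominating set. -/
def InDom (T : Tournament) (S : Finset T.V) : Prop :=
  ∀ u, u ∉ S → ∃ v ∈ S, T.arc u v

/-- `S` is an out-dominating set. -/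
def OutDom (T : Tournament) (S : Finset T.V) : Prop :=
  ∀ u, u ∉ S → ∃ v ∈ S, T.arc v u

/-- The in-domination number. -/
def inDomNum (T : Tournament) : ℕ := sInf {n | ∃ S : Finset T.V, T.InDom S ∧ S.card = n}

/-- The out-domination number. -/
def outDomNum (T : Tournament) : ℕ := sInf {n | ∃ S : Finset T.V, T.OutDom S ∧ S.card = n}

end Tournament

open Tournament

namespace Tournament

theorem hasWalk_zero {T : Tournament} {u v : T.V} : T.HasWalk u v 0 ↔ u = v := by
  constructor
  · rintro ⟨f, rfl, rfl, -⟩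
    rfl
  · rintro rfl
    exact ⟨fun _ => u, rfl, rfl, fun i => i.elim0⟩

theorem hasWalk_succ {T : Tournament} {u v : T.V} {n : ℕ} :
    T.HasWalk u v (n + 1) ↔ ∃ w, T.arc u w ∧ T.HasWalk w v n := by
  constructor
  · rintro ⟨f, rfl, rfl, h⟩
    exact ⟨f 1, h 0, fun i => f i.succ, rfl, rfl, fun i => h i.succ⟩
  · rintro ⟨w, hw, f, rfl, rfl, h⟩
    refine ⟨Fin.cons u f, rfl, ?_, ?_⟩
    · rw [← Fin.succ_last, Fin.cons_succ]
    · intro i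
      refine Fin.cases ?_ (fun j => ?_) i
      · exact hw
      · rw [← Fin.succ_castSucc, Fin.cons_succ, Fin.cons_succ]
        exact h j

theorem exists_hasWalk_of_reflTransGen {T : Tournament} {u v : T.V}
    (h : Relation.ReflTransGen T.arc u v) : ∃ n, T.HasWalk u v n := by
  induction h using Relation.ReflTransGen.head_induction_on with
  | refl => exact ⟨0, hasWalk_zero.2 rfl⟩
  | head hab _ ih =>
    obtain ⟨n, hn⟩ := ih
    exact ⟨n + 1, hasWalk_succ.2 ⟨_, hab, hn⟩⟩

theorem HasWalk.dist_le {T : Tournament} {u v : T.V} {n : ℕ} (h : T.HasWalk u v n) :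
    T.dist u v ≤ n :=
  Nat.sInf_le h

theorem HasWalk.hasWalk_dist {T : Tournament} {u v : T.V} {n : ℕ} (h : T.HasWalk u v n) :
    T.HasWalk u v (T.dist u v) :=
  Nat.sInf_mem (s := {n | T.HasWalk u v n}) ⟨n, h⟩

/-- An original node, as a node of the ILTT extension. -/
def orig (T : Tournament) (x : T.V) : T.ILTT.V := Sum.inl x

/-- The clone of a node in the ILTT extension. -/
def clone (T : Tournament) (x : T.V) : T.ILTT.V := Sum.inr x

/-- The original node underlying a node of the ILTT extension. -/
def base (T : Tournament) : T.ILTT.V → T.V := Sum.elim id id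

theorem ILTT_arc_of_arc {T : Tournament} {u v : T.ILTT.V} (h : T.arc (T.base u) (T.base v)) :
    T.ILTT.arc u v := by
  rcases u with x | x <;> rcases v with y | y
  · exact h
  · exact h
  · exact Or.inl h
  · exact h

theorem arc_or_eq_of_ILTT_arc {T : Tournament} {u v : T.ILTT.V} (h : T.ILTT.arc u v) :
    T.arc (T.base u) (T.base v) ∨ T.base u = T.base v := by
  rcases u with x | x <;> rcases v with y | y
  · exact Or.inl h
  · exact Or.inl h
  · exact h
  · exact Or.inl h

theorem HasWalk.exists_base {T : Tournament} {n : ℕ} {u v : T.ILTT.V}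
    (h : T.ILTT.HasWalk u v n) : ∃ m ≤ n, T.HasWalk (T.base u) (T.base v) m := by
  induction n generalizing u with
  | zero => exact ⟨0, le_rfl, hasWalk_zero.2 (congrArg T.base (hasWalk_zero.1 h))⟩
  | succ n ih =>
    obtain ⟨w, huw, hw⟩ := hasWalk_succ.1 h
    obtain ⟨m, hm, hwalk⟩ := ih hw
    rcases arc_or_eq_of_ILTT_arc huw with harc | heq
    · exact ⟨m + 1, by lia, hasWalk_succ.2 ⟨_, harc, hwalk⟩⟩
    · exact ⟨m, by lia, heq ▸ hwalk⟩

theorem HasWalk.ILTT {T : Tournament} {n : ℕ} {u v : T.ILTT.V}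
    (h : T.HasWalk (T.base u) (T.base v) (n + 1)) : T.ILTT.HasWalk u v (n + 1) := by
  induction n generalizing u with
  | zero =>
    obtain ⟨w, huw, hw⟩ := hasWalk_succ.1 h
    obtain rfl := hasWalk_zero.1 hw
    exact hasWalk_succ.2 ⟨v, ILTT_arc_of_arc huw, hasWalk_zero.2 rfl⟩
  | succ n ih =>
    obtain ⟨w, huw, hw⟩ := hasWalk_succ.1 h
    exact hasWalk_succ.2 ⟨T.orig w, ILTT_arc_of_arc huw, ih hw⟩

/-- Nodes of the ILTT extension lying over distinct nodes are as far apart as those nodes. -/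
theorem Strong.dist_ILTT {T : Tournament} (hT : T.Strong) {u v : T.ILTT.V}
    (huv : T.base u ≠ T.base v) : T.ILTT.dist u v = T.dist (T.base u) (T.base v) := by
  obtain ⟨n, hn⟩ := exists_hasWalk_of_reflTransGen (hT (T.base u) (T.base v))
  have hbase := hn.hasWalk_dist
  have hlift : T.ILTT.HasWalk u v (T.dist (T.base u) (T.base v)) := by
    rcases hd : T.dist (T.base u) (T.base v) with _ | k
    · exact absurd (hasWalk_zero.1 (hd ▸ hbase)) huv
    · exact HasWalk.ILTT (hd ▸ hbase)
  obtain ⟨m, hm, hwalk⟩ := hlift.hasWalk_dist.exists_base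
  exact le_antisymm hlift.dist_le (hwalk.dist_le.trans hm)

theorem arc_asymm {T : Tournament} {x y : T.V} (h : T.arc x y) : ¬ T.arc y x := by
  have hne : x ≠ y := by
    rintro rfl
    exact T.irrefl x h
  exact (T.exactlyOne x y hne).1 h

/-- Every node of a strong tournament with at least two nodes lies on a directed triangle. -/
theorem Strong.exists_triangle {T : Tournament} (hT : T.Strong) [Nontrivial T.V] (x : T.V) :
    ∃ a b, T.arc x a ∧ T.arc a b ∧ T.arc b x := by
  have leave {z : T.V} (hz : Relation.ReflTransGen T.arc z x) :
      T.arc x z → ∃ a b, T.arc x a ∧ T.arc a b ∧ T.arc b x := by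
    induction hz using Relation.ReflTransGen.head_induction_on with
    | refl => exact fun h => absurd h (T.irrefl x)
    | @head z w hzw _ ih =>
      intro hxz
      by_cases hxw : T.arc x w
      · exact ih hxw
      · have hne : w ≠ x := by
          rintro rfl
          exact arc_asymm hxz hzw
        exact ⟨z, w, hxz, hzw, (T.exactlyOne w x hne).2 hxw⟩
  obtain ⟨y, hy⟩ := exists_ne x
  obtain rfl | ⟨a, hxa, -⟩ := (hT x y).cases_head
  · exact absurd rfl hy
  · exact leave (hT a x) hxa

theorem dist_ILTT_clone_self (T : Tournament) (x : T.V) :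
    T.ILTT.dist (T.clone x) (T.orig x) = 1 := by
  have hwalk : T.ILTT.HasWalk (T.clone x) (T.orig x) 1 :=
    hasWalk_succ.2 ⟨T.orig x, Or.inr rfl, hasWalk_zero.2 rfl⟩
  refine le_antisymm hwalk.dist_le (Nat.one_le_iff_ne_zero.2 fun h => ?_)
  have hzero := hwalk.hasWalk_dist
  rw [h, hasWalk_zero] at hzero
  exact Sum.inr_ne_inl hzero

theorem Strong.dist_ILTT_self_clone {T : Tournament} (hT : T.Strong) [Nontrivial T.V] (x : T.V) :
    T.ILTT.dist (T.orig x) (T.clone x) = 3 := by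
  obtain ⟨a, b, hxa, hab, hbx⟩ := hT.exists_triangle x
  have hwalk : T.ILTT.HasWalk (T.orig x) (T.clone x) 3 :=
    HasWalk.ILTT (hasWalk_succ.2 ⟨a, hxa, hasWalk_succ.2 ⟨b, hab, hasWalk_succ.2
      ⟨x, hbx, hasWalk_zero.2 rfl⟩⟩⟩)
  refine le_antisymm hwalk.dist_le (not_lt.1 fun hlt => ?_)
  have hmin := hwalk.hasWalk_dist
  generalize T.ILTT.dist (T.orig x) (T.clone x) = d at hlt hmin
  interval_cases d
  · exact Sum.inl_ne_inr (hasWalk_zero.1 hmin)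
  · obtain ⟨w, hw, h⟩ := hasWalk_succ.1 hmin
    obtain rfl := hasWalk_zero.1 h
    exact T.irrefl x hw
  · obtain ⟨w, hw, h⟩ := hasWalk_succ.1 hmin
    obtain ⟨w', hw', h'⟩ := hasWalk_succ.1 h
    obtain rfl := hasWalk_zero.1 h'
    rcases w with y | y <;> exact arc_asymm (T := T) hw hw'

theorem dist_self (T : Tournament) (x : T.V) : T.dist x x = 0 :=
  Nat.le_zero.1 (HasWalk.dist_le (hasWalk_zero.2 rfl))

theorem wiener_eq_sum (T : Tournament) : T.wiener = ∑ x, ∑ y, T.dist x y := by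
  rw [wiener, Finset.sum_filter_of_ne, Fintype.sum_prod_type]
  rintro ⟨x, y⟩ - h hxy
  obtain rfl : x = y := hxy
  exact h (T.dist_self x)

/-- The distances between the four pairs of nodes lying over `x` and `y`. -/
theorem Strong.sum_dist_ILTT {T : Tournament} (hT : T.Strong) [Nontrivial T.V] (x y : T.V) :
    T.ILTT.dist (T.orig x) (T.orig y) + T.ILTT.dist (T.orig x) (T.clone y) +
      (T.ILTT.dist (T.clone x) (T.orig y) + T.ILTT.dist (T.clone x) (T.clone y)) =
    4 * T.dist x y + if x = y then 4 else 0 := by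
  split_ifs with hxy
  · subst hxy
    rw [hT.dist_ILTT_self_clone, dist_ILTT_clone_self, dist_self, dist_self, dist_self]
  · have hd (u v : T.ILTT.V) (hu : T.base u = x) (hv : T.base v = y) :
        T.ILTT.dist u v = T.dist x y := by
      subst hu hv
      exact hT.dist_ILTT hxy
    rw [hd (T.orig x) (T.orig y) rfl rfl, hd (T.orig x) (T.clone y) rfl rfl,
      hd (T.clone x) (T.orig y) rfl rfl, hd (T.clone x) (T.clone y) rfl rfl]
    ring

theorem wiener_ILTT_eq_sum (T : Tournament) :
    T.ILTT.wiener = ∑ x, ∑ y,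
      (T.ILTT.dist (T.orig x) (T.orig y) + T.ILTT.dist (T.orig x) (T.clone y) +
        (T.ILTT.dist (T.clone x) (T.orig y) + T.ILTT.dist (T.clone x) (T.clone y))) := by
  have hsum (f : T.ILTT.V → ℕ) : ∑ u, f u = ∑ x, f (T.orig x) + ∑ x, f (T.clone x) :=
    Fintype.sum_sum_type f
  simp only [wiener_eq_sum, hsum, Finset.sum_add_distrib]

end Tournament

/-- For a strong tournament `G` of order `n ≥ 3`,
`W(ILTT(G)) = 4(n + W(G))`. -/
theorem stmt6 (G : Tournament) (n : ℕ) (hn : Fintype.card G.V = n)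
    (hcard : 3 ≤ n) (hG : G.Strong) :
    (G.ILTT).wiener = 4 * (n + G.wiener) := by
  have : Nontrivial G.V := Fintype.one_lt_card_iff_nontrivial.1 (by lia)
  rw [wiener_ILTT_eq_sum, wiener_eq_sum]
  simp only [hG.sum_dist_ILTT, Finset.sum_add_distrib, ← Finset.mul_sum, Finset.sum_ite_eq,
    Finset.mem_univ, if_true, Finset.sum_const, Finset.card_univ, hn, smul_eq_mul]
  ring
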